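/- arXiv:1108.4202 — 3 statements merged into one kernel-verified Lean document; each statement's English description precedes it below -/
import Mathlib

section
/- For every integer n ≥ 0, there are isomorphisms of sl(2,ℂ)-modules S²V(n) ≅ ⊕_{k=0}^{⌊n/2⌋} V(2n−4k) and Λ²V(n) ≅ ⊕_{k=0}^{⌊(n−1)/2⌋} V(2n−2−4k), where S²V(n) and Λ²V(n) denote the symmetric and exterior squares of V(n). -/
/-! For `p ≤ n` the vector `u_p = ∑ (-1)^i (n-i)! (n-p+i)! v_i ⊗ v_{p-i}` of `V(n) ⊗ V(n)` is killed
by `E` and has weight `2n - 2p` (`tenE_hwVec`, `tenH_hwVec`). Exchanging the tensor factors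
multiplies it by `(-1)^p` (`comm_hwVec`), so `u_p` has nonzero image in the symmetric square for
even `p` and in the exterior square for odd `p`.

In a finite-dimensional module, highest weight vectors of pairwise distinct weights `w_k` generate a
copy of `⊕ V(w_k)` (`exists_injective_of_highestWeight`). Hence `⊕ V(2n - 4k)` embeds in the
symmetric square and `⊕ V(2n - 2 - 4k)` in the exterior square. The dimensions of these two sums
add up to `(n+1)²` (`sum_dims`), while the dimensions of the two squares add up to at most `(n+1)²`,
because the defining relations of both together span `V(n) ⊗ V(n)` (`finrank_add_finrank_le`).
Therefore both embeddings are isomorphisms. -/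

noncomputable section

/-- The action of `H` on the standard irreducible `sl(2,ℂ)`-module `V(n)`:
`H · v_i = (n − 2i) v_i` on the basis `v_0, …, v_n`. -/
def Hstd (n : ℕ) : Module.End ℂ (Fin (n+1) → ℂ) :=
  Matrix.mulVecLin (Matrix.of fun i j : Fin (n+1) =>
    if i = j then ((n : ℂ) - 2 * ((i : ℕ) : ℂ)) else 0)

/-- The action of `E` on `V(n)`: `E · v_j = (n − j + 1) v_{j−1}` (and `E · v_0 = 0`). -/
def Estd (n : ℕ) : Module.End ℂ (Fin (n+1) → ℂ) :=
  Matrix.mulVecLin (Matrix.of fun i j : Fin (n+1) =>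
    if (j : ℕ) = (i : ℕ) + 1 then ((n : ℂ) - ((j : ℕ) : ℂ) + 1) else 0)

/-- The action of `F` on `V(n)`: `F · v_j = (j + 1) v_{j+1}` (and `F · v_n = 0`). -/
def Fstd (n : ℕ) : Module.End ℂ (Fin (n+1) → ℂ) :=
  Matrix.mulVecLin (Matrix.of fun i j : Fin (n+1) =>
    if (i : ℕ) = (j : ℕ) + 1 then (((j : ℕ) : ℂ) + 1) else 0)

/-- A triple of endomorphisms making `V` an `sl(2,ℂ)`-module: the commutation relations
`[H,E] = 2E`, `[H,F] = −2F`, `[E,F] = H` hold. -/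
def IsSL2Triple {V : Type*} [AddCommGroup V] [Module ℂ V] (h e f : Module.End ℂ V) : Prop :=
  h * e - e * h = (2 : ℂ) • e ∧ h * f - f * h = (-2 : ℂ) • f ∧ e * f - f * e = h

/-- A submodule invariant under the given `sl(2,ℂ)`-action. -/
def IsInvariantTriple {V : Type*} [AddCommGroup V] [Module ℂ V] (h e f : Module.End ℂ V)
    (p : Submodule ℂ V) : Prop :=
  ∀ x ∈ p, h x ∈ p ∧ e x ∈ p ∧ f x ∈ p

/-- Irreducibility of the `sl(2,ℂ)`-module structure given by the triple `(h,e,f)`. -/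
def IsIrreducibleTriple {V : Type*} [AddCommGroup V] [Module ℂ V]
    (h e f : Module.End ℂ V) : Prop :=
  (∃ x : V, x ≠ 0) ∧ ∀ p : Submodule ℂ V, IsInvariantTriple h e f p → p = ⊥ ∨ p = ⊤

/-- Isomorphism of `sl(2,ℂ)`-modules presented by triples of endomorphisms. -/
def RepIso {V W : Type*} [AddCommGroup V] [Module ℂ V] [AddCommGroup W] [Module ℂ W]
    (hV eV fV : Module.End ℂ V) (hW eW fW : Module.End ℂ W) : Prop :=
  ∃ T : V ≃ₗ[ℂ] W,
    (∀ x, T (hV x) = hW (T x)) ∧ (∀ x, T (eV x) = eW (T x)) ∧ (∀ x, T (fV x) = fW (T x))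

/-- The componentwise action on the direct sum `⊕ i, V(w i)`. -/
def piRepH (ι : Type) (w : ι → ℕ) : Module.End ℂ (∀ i : ι, Fin (w i + 1) → ℂ) :=
  LinearMap.pi fun i => Hstd (w i) ∘ₗ LinearMap.proj i

def piRepE (ι : Type) (w : ι → ℕ) : Module.End ℂ (∀ i : ι, Fin (w i + 1) → ℂ) :=
  LinearMap.pi fun i => Estd (w i) ∘ₗ LinearMap.proj i

def piRepF (ι : Type) (w : ι → ℕ) : Module.End ℂ (∀ i : ι, Fin (w i + 1) → ℂ) :=
  LinearMap.pi fun i => Fstd (w i) ∘ₗ LinearMap.proj i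

open TensorProduct

/-- The relations defining the symmetric square `S²V(n)` as a quotient of `V(n) ⊗ V(n)`. -/
def Qsym (n : ℕ) : Submodule ℂ (TensorProduct ℂ (Fin (n+1) → ℂ) (Fin (n+1) → ℂ)) :=
  Submodule.span ℂ {z | ∃ x y : Fin (n+1) → ℂ, z = x ⊗ₜ[ℂ] y - y ⊗ₜ[ℂ] x}

/-- The relations defining the exterior square `Λ²V(n)` as a quotient of `V(n) ⊗ V(n)`. -/
def Qalt (n : ℕ) : Submodule ℂ (TensorProduct ℂ (Fin (n+1) → ℂ) (Fin (n+1) → ℂ)) :=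
  Submodule.span ℂ {z | ∃ x : Fin (n+1) → ℂ, z = x ⊗ₜ[ℂ] x}

/-- The derivation action of `H` on `V(n) ⊗ V(n)`. -/
def tenH (n : ℕ) : Module.End ℂ (TensorProduct ℂ (Fin (n+1) → ℂ) (Fin (n+1) → ℂ)) :=
  LinearMap.rTensor _ (Hstd n) + LinearMap.lTensor _ (Hstd n)

/-- The derivation action of `E` on `V(n) ⊗ V(n)`. -/
def tenE (n : ℕ) : Module.End ℂ (TensorProduct ℂ (Fin (n+1) → ℂ) (Fin (n+1) → ℂ)) :=
  LinearMap.rTensor _ (Estd n) + LinearMap.lTensor _ (Estd n)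

/-- The derivation action of `F` on `V(n) ⊗ V(n)`. -/
def tenF (n : ℕ) : Module.End ℂ (TensorProduct ℂ (Fin (n+1) → ℂ) (Fin (n+1) → ℂ)) :=
  LinearMap.rTensor _ (Fstd n) + LinearMap.lTensor _ (Fstd n)

/-! ### The basis vectors and the standard modules -/

/-- The basis vector `v_i` of `V(n)`, indexed by all `i : ℕ` with `v_i = 0` for `i > n`; with this
convention the formulas for `H`, `E` and `F` need no boundary cases. -/
def stdVec (n i : ℕ) : Fin (n+1) → ℂ := fun j => if (j : ℕ) = i then 1 else 0

lemma stdVec_eq_single (n : ℕ) (i : Fin (n+1)) : stdVec n i = Pi.single i 1 := by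
  ext j
  simp [stdVec, Pi.single_apply, Fin.ext_iff]

lemma stdVec_of_lt {n i : ℕ} (h : n < i) : stdVec n i = 0 := by
  ext j
  have := j.2
  simp only [stdVec, Pi.zero_apply, ite_eq_right_iff, one_ne_zero, imp_false]
  omega

lemma ext_stdVec {n : ℕ} {M : Type*} [AddCommGroup M] [Module ℂ M]
    {A B : (Fin (n+1) → ℂ) →ₗ[ℂ] M} (h : ∀ i : ℕ, A (stdVec n i) = B (stdVec n i)) : A = B := by
  refine (Pi.basisFun ℂ (Fin (n+1))).ext fun i => ?_
  rw [Pi.basisFun_apply, ← stdVec_eq_single]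
  exact h i

lemma Hstd_apply (n : ℕ) (x : Fin (n+1) → ℂ) (i : Fin (n+1)) :
    Hstd n x i = ((n : ℂ) - 2 * (i : ℕ)) * x i := by
  simp [Hstd, Matrix.mulVec, dotProduct]

lemma Estd_apply (n : ℕ) (x : Fin (n+1) → ℂ) (i : Fin (n+1)) (hi : (i : ℕ) + 1 < n + 1) :
    Estd n x i = ((n : ℂ) - (i : ℕ)) * x ⟨i + 1, hi⟩ := by
  simp only [Estd, Matrix.mulVecLin_apply, Matrix.mulVec, dotProduct, Matrix.of_apply]
  rw [Finset.sum_eq_single ⟨i + 1, hi⟩]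
  · rw [if_pos rfl]
    push_cast
    ring
  · intro j _ hj
    rw [if_neg fun h => hj (Fin.ext h), zero_mul]
  · simp

lemma Hstd_stdVec (n i : ℕ) : Hstd n (stdVec n i) = ((n : ℂ) - 2 * i) • stdVec n i := by
  ext j
  rw [Hstd_apply]
  by_cases h : (j : ℕ) = i <;> simp [stdVec, h]

lemma Estd_stdVec_zero (n : ℕ) : Estd n (stdVec n 0) = 0 := by
  ext j
  simp only [Estd, Matrix.mulVecLin_apply, Matrix.mulVec, dotProduct, Matrix.of_apply, stdVec,
    Pi.zero_apply]
  refine Finset.sum_eq_zero fun k _ => ?_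
  by_cases h : (k : ℕ) = 0 <;> simp [h]

lemma Estd_stdVec_succ (n i : ℕ) :
    Estd n (stdVec n (i + 1)) = ((n : ℂ) - i) • stdVec n i := by
  ext j
  by_cases hj : (j : ℕ) + 1 < n + 1
  · rw [Estd_apply n _ j hj]
    by_cases h : (j : ℕ) = i <;> simp [stdVec, h]
  · have hj' : (j : ℕ) = n := by have := j.2; omega
    -- in the last coordinate both sides vanish: `n - i = 0` if `i = n`
    have : Estd n (stdVec n (i + 1)) j = 0 := by
      simp only [Estd, Matrix.mulVecLin_apply, Matrix.mulVec, dotProduct, Matrix.of_apply]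
      refine Finset.sum_eq_zero fun k _ => ?_
      rw [if_neg (by have := k.2; omega), zero_mul]
    rw [this]
    by_cases h : n = i <;> simp [stdVec, hj', h]

lemma Fstd_stdVec (n i : ℕ) : Fstd n (stdVec n i) = ((i : ℂ) + 1) • stdVec n (i + 1) := by
  ext j
  simp only [Fstd, Matrix.mulVecLin_apply, Matrix.mulVec, dotProduct, Matrix.of_apply,
    Pi.smul_apply, smul_eq_mul, stdVec]
  by_cases hj : (j : ℕ) = i + 1
  · rw [Finset.sum_eq_single ⟨i, by have := j.2; omega⟩]
    · simp [hj]
    · intro k _ hk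
      rw [if_neg (fun h : (k : ℕ) = i => hk (Fin.ext h)), mul_zero]
    · simp
  · rw [if_neg hj, mul_zero]
    refine Finset.sum_eq_zero fun k _ => ?_
    by_cases hk : (k : ℕ) = i <;> simp [hk, hj]

lemma isSL2Triple_std (n : ℕ) : IsSL2Triple (Hstd n) (Estd n) (Fstd n) := by
  refine ⟨ext_stdVec fun i => ?_, ext_stdVec fun i => ?_, ext_stdVec fun i => ?_⟩
  · cases i with
    | zero => simp [Hstd_stdVec, Estd_stdVec_zero]
    | succ i =>
      simp only [LinearMap.sub_apply, Module.End.mul_apply, LinearMap.smul_apply, Hstd_stdVec,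
        Estd_stdVec_succ, map_smul]
      push_cast
      module
  · simp only [LinearMap.sub_apply, Module.End.mul_apply, LinearMap.smul_apply, Hstd_stdVec,
      Fstd_stdVec, map_smul]
    push_cast
    module
  · cases i with
    | zero =>
      simp [Hstd_stdVec, Estd_stdVec_zero, Fstd_stdVec, Estd_stdVec_succ]
    | succ i =>
      simp only [LinearMap.sub_apply, Module.End.mul_apply, Hstd_stdVec, Fstd_stdVec,
        Estd_stdVec_succ, map_smul]
      push_cast
      module

/-! ### Direct sums of standard modules generated by highest weight vectors -/

section HighestWeight

variable {M : Type*} [AddCommGroup M] [Module ℂ M] {h e f : Module.End ℂ M}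

lemma IsSL2Triple.h_pow_f (t : IsSL2Triple h e f) {m : M} {w : ℂ} (hm : h m = w • m) (i : ℕ) :
    h ((f ^ i) m) = (w - 2 * i) • (f ^ i) m := by
  induction i with
  | zero => simpa using hm
  | succ i ih =>
    have := LinearMap.congr_fun t.2.1 ((f ^ i) m)
    simp only [LinearMap.sub_apply, Module.End.mul_apply, LinearMap.smul_apply, ih, map_smul,
      sub_eq_iff_eq_add] at this
    rw [pow_succ', Module.End.mul_apply, this]
    push_cast
    module

lemma IsSL2Triple.e_pow_f_succ (t : IsSL2Triple h e f) {m : M} {w : ℂ} (hm : h m = w • m)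
    (he : e m = 0) (i : ℕ) :
    e ((f ^ (i + 1)) m) = ((i + 1) * (w - i)) • (f ^ i) m := by
  induction i with
  | zero =>
    have := LinearMap.congr_fun t.2.2 m
    simp only [LinearMap.sub_apply, Module.End.mul_apply, he, map_zero, sub_zero, hm] at this
    simp [this]
  | succ i ih =>
    have := LinearMap.congr_fun t.2.2 ((f ^ (i + 1)) m)
    simp only [LinearMap.sub_apply, Module.End.mul_apply, ih, map_smul, sub_eq_iff_eq_add,
      t.h_pow_f hm] at this
    rw [pow_succ', Module.End.mul_apply, this, ← Module.End.mul_apply f, ← pow_succ']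
    push_cast
    module

lemma IsSL2Triple.pow_f_eq_zero [FiniteDimensional ℂ M] (t : IsSL2Triple h e f) {m : M} {w : ℕ}
    (h0 : m ≠ 0) (hm : h m = (w : ℂ) • m) (he : e m = 0) {i : ℕ} (hi : w < i) :
    (f ^ i) m = 0 := by
  suffices (f ^ (w + 1)) m = 0 by
    obtain ⟨k, rfl⟩ := Nat.exists_eq_add_of_lt hi
    rw [show w + k + 1 = k + (w + 1) by ring, pow_add, Module.End.mul_apply, this, map_zero]
  -- The structure `IsSl2Triple` in Mathlib requires `h ≠ 0`; if `h = 0` then `-2f = [h, f] = 0`.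
  by_cases hh : h = 0
  · have hf : f = 0 := by
      have := t.2.1
      simpa [hh] using this
    simp [hf]
  · let _ : LieRing (Module.End ℂ M) := LieRing.ofAssociativeRing
    have t' : IsSl2Triple h e f :=
      { h_ne_zero := hh
        lie_e_f := t.2.2
        lie_h_e_nsmul := by
          rw [Ring.lie_def, t.1]
          module
        lie_h_f_nsmul := by
          rw [Ring.lie_def, t.2.1]
          module }
    have P : t'.HasPrimitiveVectorWith m (w : ℂ) := ⟨h0, hm, he⟩
    exact P.pow_toEnd_f_eq_zero_of_eq_nat rfl

/-- The linear map `V(w) → M` sending `v_i` to `f^i m / i!`; it is a module map if `m` is a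
highest weight vector of weight `w`. -/
def hwMap (f : Module.End ℂ M) (w : ℕ) (m : M) : (Fin (w+1) → ℂ) →ₗ[ℂ] M :=
  Fintype.linearCombination ℂ fun i : Fin (w+1) => ((i : ℕ).factorial : ℂ)⁻¹ • (f ^ (i : ℕ)) m

lemma hwMap_stdVec [FiniteDimensional ℂ M] (t : IsSL2Triple h e f) {m : M} {w : ℕ}
    (h0 : m ≠ 0) (hm : h m = (w : ℂ) • m) (he : e m = 0) (i : ℕ) :
    hwMap f w m (stdVec w i) = (i.factorial : ℂ)⁻¹ • (f ^ i) m := by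
  by_cases hi : i < w + 1
  · have := stdVec_eq_single w ⟨i, hi⟩
    simp only at this
    rw [hwMap, this, Fintype.linearCombination_apply_single]
    simp
  · rw [stdVec_of_lt (by omega), t.pow_f_eq_zero h0 hm he (by omega), map_zero, smul_zero]

lemma hwMap_comp [FiniteDimensional ℂ M] (t : IsSL2Triple h e f) {m : M} {w : ℕ}
    (h0 : m ≠ 0) (hm : h m = (w : ℂ) • m) (he : e m = 0) :
    hwMap f w m ∘ₗ Hstd w = h ∘ₗ hwMap f w m ∧ hwMap f w m ∘ₗ Estd w = e ∘ₗ hwMap f w m ∧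
      hwMap f w m ∘ₗ Fstd w = f ∘ₗ hwMap f w m := by
  have key := hwMap_stdVec t h0 hm he
  have fac : ∀ i : ℕ, ((i + 1).factorial : ℂ)⁻¹ * (i + 1) = (i.factorial : ℂ)⁻¹ := fun i => by
    have h1 : (i : ℂ) + 1 ≠ 0 := by exact_mod_cast i.succ_ne_zero
    have h2 : (i.factorial : ℂ) ≠ 0 := by exact_mod_cast i.factorial_ne_zero
    rw [Nat.factorial_succ]
    push_cast
    field_simp
  refine ⟨ext_stdVec fun i => ?_, ext_stdVec fun i => ?_, ext_stdVec fun i => ?_⟩ <;>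
    simp only [LinearMap.comp_apply]
  · rw [Hstd_stdVec, map_smul, key, map_smul, t.h_pow_f hm, smul_comm]
  · cases i with
    | zero => simp [Estd_stdVec_zero, key, he]
    | succ i =>
      rw [Estd_stdVec_succ, map_smul, key, key, map_smul, t.e_pow_f_succ hm he, smul_smul,
        smul_smul, ← fac i]
      congr 1
      ring
  · rw [Fstd_stdVec, map_smul, key, key, map_smul, pow_succ', Module.End.mul_apply, smul_smul,
      mul_comm, fac]

/-- A finite-dimensional module in which there are highest weight vectors `m_k` of pairwise
distinct weights `w_k` contains `⊕ V(w_k)`. For injectivity, `E` strictly lowers the largest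
occurring index, so a nonzero kernel would contain a nonzero vector killed by `E`, that is, a
combination of vectors `v_0`, contradicting the linear independence of the `m_k`. -/
lemma exists_injective_of_highestWeight [FiniteDimensional ℂ M] (t : IsSL2Triple h e f)
    {ι : Type} [Fintype ι] (w : ι → ℕ) (hw : Function.Injective w) (m : ι → M)
    (h0 : ∀ k, m k ≠ 0) (hm : ∀ k, h (m k) = (w k : ℂ) • m k) (he : ∀ k, e (m k) = 0) :
    ∃ T : (∀ k, Fin (w k + 1) → ℂ) →ₗ[ℂ] M, Function.Injective T ∧
      (∀ x, T (piRepH ι w x) = h (T x)) ∧ (∀ x, T (piRepE ι w x) = e (T x)) ∧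
      (∀ x, T (piRepF ι w x) = f (T x)) := by
  classical
  let T : (∀ k, Fin (w k + 1) → ℂ) →ₗ[ℂ] M := ∑ k, hwMap f (w k) (m k) ∘ₗ LinearMap.proj k
  have hT : ∀ x, T x = ∑ k, hwMap f (w k) (m k) (x k) := fun x => by simp [T]
  have hc := fun k => hwMap_comp t (h0 k) (hm k) (he k)
  have TH : ∀ x, T (piRepH ι w x) = h (T x) := fun x => by
    rw [hT, hT, map_sum]
    exact Finset.sum_congr rfl fun k _ => LinearMap.congr_fun (hc k).1 (x k)
  have TE : ∀ x, T (piRepE ι w x) = e (T x) := fun x => by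
    rw [hT, hT, map_sum]
    exact Finset.sum_congr rfl fun k _ => LinearMap.congr_fun (hc k).2.1 (x k)
  have TF : ∀ x, T (piRepF ι w x) = f (T x) := fun x => by
    rw [hT, hT, map_sum]
    exact Finset.sum_congr rfl fun k _ => LinearMap.congr_fun (hc k).2.2 (x k)
  refine ⟨T, ?_, TH, TE, TF⟩
  have li : LinearIndependent ℂ m :=
    Module.End.eigenvectors_linearIndependent' h (fun k => (w k : ℂ))
      (fun a b hab => hw (Nat.cast_injective hab)) m
      fun k => Module.End.hasEigenvector_iff.mpr ⟨Module.End.mem_eigenspace_iff.mpr (hm k), h0 k⟩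
  have main : ∀ (N : ℕ) (x : ∀ k, Fin (w k + 1) → ℂ), T x = 0 →
      (∀ k (i : Fin (w k + 1)), N ≤ (i : ℕ) → x k i = 0) → x = 0 := by
    intro N
    induction N with
    | zero =>
      intro x _ hx
      ext k i
      exact hx k i (Nat.zero_le _)
    | succ N ih =>
      intro x hTx hx
      have hE : piRepE ι w x = 0 := by
        refine ih _ (by rw [TE, hTx, map_zero]) fun k i hi => ?_
        change Estd (w k) (x k) i = 0
        by_cases hi' : (i : ℕ) + 1 < w k + 1
        · rw [Estd_apply _ _ _ hi', hx k ⟨i + 1, hi'⟩ (by simpa using hi), mul_zero]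
        · simp only [Estd, Matrix.mulVecLin_apply, Matrix.mulVec, dotProduct, Matrix.of_apply]
          refine Finset.sum_eq_zero fun j _ => ?_
          rw [if_neg (by have := j.2; omega), zero_mul]
      have hpos : ∀ k (i : Fin (w k + 1)), (i : ℕ) ≠ 0 → x k i = 0 := by
        intro k i hi
        obtain ⟨j, hj⟩ := Nat.exists_eq_succ_of_ne_zero hi
        have hjw : j + 1 < w k + 1 := by have := i.2; omega
        have h1 : Estd (w k) (x k) ⟨j, by omega⟩ = 0 := congr_fun (congr_fun hE k) _
        rw [Estd_apply _ _ _ hjw, mul_eq_zero] at h1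
        have hi' : i = ⟨j + 1, hjw⟩ := Fin.ext hj
        rw [hi']
        refine h1.resolve_left (sub_ne_zero.mpr ?_)
        have : w k ≠ j := by omega
        exact_mod_cast this
      have hx0 : ∀ k, hwMap f (w k) (m k) (x k) = x k 0 • m k := by
        intro k
        rw [hwMap, Fintype.linearCombination_apply, Finset.sum_eq_single 0]
        · simp
        · intro i _ hi
          rw [hpos k i (fun h => hi (Fin.ext h)), zero_smul]
        · simp
      rw [hT] at hTx
      simp only [hx0] at hTx
      have h00 := Fintype.linearIndependent_iff.mp li (fun k => x k 0) hTx
      ext k i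
      by_cases hi : (i : ℕ) = 0
      · rw [show i = 0 from Fin.ext hi]
        exact h00 k
      · exact hpos k i hi
  refine (injective_iff_map_eq_zero T).mpr fun x hx =>
    main ((∑ k, w k) + 1) x hx fun k i hi => ?_
  have h1 := i.2
  have h2 := Finset.single_le_sum (f := w) (fun _ _ => Nat.zero_le _) (Finset.mem_univ k)
  omega

end HighestWeight

/-! ### The derivation action on the tensor square -/

/-- The derivation action of an endomorphism on the tensor square; `tenH`, `tenE`, `tenF` are
its values at `Hstd`, `Estd`, `Fstd`. -/
def derEnd {V : Type*} [AddCommGroup V] [Module ℂ V] (X : Module.End ℂ V) :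
    Module.End ℂ (V ⊗[ℂ] V) :=
  LinearMap.rTensor _ X + LinearMap.lTensor _ X

lemma derEnd_tmul {V : Type*} [AddCommGroup V] [Module ℂ V] (X : Module.End ℂ V) (x y : V) :
    derEnd X (x ⊗ₜ y) = X x ⊗ₜ y + x ⊗ₜ X y := by
  simp [derEnd]

lemma derEnd_commutator {V : Type*} [AddCommGroup V] [Module ℂ V] (X Y : Module.End ℂ V) :
    derEnd X * derEnd Y - derEnd Y * derEnd X = derEnd (X * Y - Y * X) := by
  refine TensorProduct.ext' fun x y => ?_
  simp only [LinearMap.sub_apply, Module.End.mul_apply, derEnd_tmul, map_add, sub_tmul, tmul_sub]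
  abel

lemma derEnd_smul {V : Type*} [AddCommGroup V] [Module ℂ V] (c : ℂ) (X : Module.End ℂ V) :
    derEnd (c • X) = c • derEnd X := by
  refine TensorProduct.ext' fun x y => ?_
  simp only [LinearMap.smul_apply, derEnd_tmul, smul_add, smul_tmul', tmul_smul]

lemma isSL2Triple_ten (n : ℕ) : IsSL2Triple (tenH n) (tenE n) (tenF n) := by
  obtain ⟨h1, h2, h3⟩ := isSL2Triple_std n
  change IsSL2Triple (derEnd (Hstd n)) (derEnd (Estd n)) (derEnd (Fstd n))
  refine ⟨?_, ?_, ?_⟩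
  · rw [derEnd_commutator, h1, derEnd_smul]
  · rw [derEnd_commutator, h2, derEnd_smul]
  · rw [derEnd_commutator, h3]

lemma Qsym_le_comap (n : ℕ) (X : Module.End ℂ (Fin (n+1) → ℂ)) :
    Qsym n ≤ (Qsym n).comap (derEnd X) := by
  refine Submodule.span_le.mpr ?_
  rintro _ ⟨x, y, rfl⟩
  have h1 : X x ⊗ₜ[ℂ] y - y ⊗ₜ[ℂ] X x ∈ Qsym n := Submodule.subset_span ⟨_, _, rfl⟩
  have h2 : x ⊗ₜ[ℂ] X y - X y ⊗ₜ[ℂ] x ∈ Qsym n := Submodule.subset_span ⟨_, _, rfl⟩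
  change derEnd X _ ∈ Qsym n
  rw [map_sub, derEnd_tmul, derEnd_tmul]
  convert add_mem h1 h2 using 1
  abel

lemma tmul_add_tmul_mem_Qalt (n : ℕ) (x y : Fin (n+1) → ℂ) :
    x ⊗ₜ[ℂ] y + y ⊗ₜ[ℂ] x ∈ Qalt n := by
  have h : ∀ z : Fin (n+1) → ℂ, z ⊗ₜ[ℂ] z ∈ Qalt n := fun z => Submodule.subset_span ⟨z, rfl⟩
  convert sub_mem (sub_mem (h (x + y)) (h x)) (h y) using 1
  simp only [add_tmul, tmul_add]
  abel

lemma Qalt_le_comap (n : ℕ) (X : Module.End ℂ (Fin (n+1) → ℂ)) :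
    Qalt n ≤ (Qalt n).comap (derEnd X) := by
  refine Submodule.span_le.mpr ?_
  rintro _ ⟨x, rfl⟩
  change derEnd X _ ∈ Qalt n
  rw [derEnd_tmul]
  exact tmul_add_tmul_mem_Qalt n _ _

lemma Qsym_sup_Qalt (n : ℕ) : Qsym n ⊔ Qalt n = ⊤ := by
  refine eq_top_iff.mpr ?_
  rw [← TensorProduct.span_tmul_eq_top, Submodule.span_le]
  rintro _ ⟨x, y, rfl⟩
  have h1 : x ⊗ₜ[ℂ] y - y ⊗ₜ[ℂ] x ∈ Qsym n ⊔ Qalt n :=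
    Submodule.mem_sup_left (Submodule.subset_span ⟨_, _, rfl⟩)
  have h2 := Submodule.mem_sup_right (S := Qsym n) (tmul_add_tmul_mem_Qalt n x y)
  change x ⊗ₜ[ℂ] y ∈ Qsym n ⊔ Qalt n
  convert Submodule.smul_mem _ (2⁻¹ : ℂ) (add_mem h1 h2) using 1
  module

/-- Since `Qsym` and `Qalt` together span `V(n) ⊗ V(n)`, the dimensions of the symmetric and the
exterior square add up to at most `(n+1)²`. -/
lemma finrank_add_finrank_le (n : ℕ) :
    Module.finrank ℂ (((Fin (n+1) → ℂ) ⊗[ℂ] (Fin (n+1) → ℂ)) ⧸ Qsym n) +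
      Module.finrank ℂ (((Fin (n+1) → ℂ) ⊗[ℂ] (Fin (n+1) → ℂ)) ⧸ Qalt n) ≤ (n + 1) * (n + 1) := by
  have h1 := (Qsym n).finrank_quotient_add_finrank
  have h2 := (Qalt n).finrank_quotient_add_finrank
  have h3 := Submodule.finrank_sup_add_finrank_inf_eq (Qsym n) (Qalt n)
  rw [Qsym_sup_Qalt, finrank_top] at h3
  simp only [Module.finrank_tensorProduct, Module.finrank_fin_fun] at h1 h2 h3
  omega

/-! ### Highest weight vectors in the tensor square -/

/-- The coefficient of `v_i ⊗ v_{p-i}` in the highest weight vector of weight `2n - 2p`. -/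
def hwCoeff (n p i : ℕ) : ℂ := (-1) ^ i * (n - i).factorial * (n - (p - i)).factorial

/-- The highest weight vector `∑ (-1)^i (n-i)! (n-p+i)! v_i ⊗ v_{p-i}` of weight `2n - 2p` in
`V(n) ⊗ V(n)`, for `p ≤ n`. -/
def hwVec (n p : ℕ) : (Fin (n+1) → ℂ) ⊗[ℂ] (Fin (n+1) → ℂ) :=
  ∑ i ∈ Finset.range (p + 1), hwCoeff n p i • (stdVec n i ⊗ₜ[ℂ] stdVec n (p - i))

lemma tenH_hwVec (n p : ℕ) : tenH n (hwVec n p) = (2 * (n : ℂ) - 2 * p) • hwVec n p := by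
  rw [hwVec, map_sum, Finset.smul_sum]
  refine Finset.sum_congr rfl fun i hi => ?_
  have hi' : i ≤ p := by simpa [Nat.lt_succ_iff] using hi
  change derEnd (Hstd n) _ = _
  rw [map_smul, derEnd_tmul, Hstd_stdVec, Hstd_stdVec, tmul_smul, ← smul_tmul', ← add_smul,
    smul_smul, smul_smul]
  congr 1
  push_cast [hi']
  ring

/-- The contributions `E v_i ⊗ v_{p-i}` and `v_i ⊗ E v_{p-i}` cancel by the recursion
`(n - i) a_{i+1} + (n - p + i + 1) a_i = 0` for the coefficients. -/
lemma tenE_hwVec {n p : ℕ} (hp : p ≤ n) : tenE n (hwVec n p) = 0 := by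
  have hE : ∀ i, tenE n (hwCoeff n p i • (stdVec n i ⊗ₜ[ℂ] stdVec n (p - i))) =
      hwCoeff n p i • (Estd n (stdVec n i) ⊗ₜ[ℂ] stdVec n (p - i)) +
      hwCoeff n p i • (stdVec n i ⊗ₜ[ℂ] Estd n (stdVec n (p - i))) := fun i => by
    change derEnd (Estd n) _ = _
    rw [map_smul, derEnd_tmul, smul_add]
  rw [hwVec, map_sum]
  simp only [hE]
  rw [Finset.sum_add_distrib, Finset.sum_range_succ', Finset.sum_range_succ (n := p)]
  simp only [Estd_stdVec_zero, zero_tmul, tmul_zero, smul_zero, add_zero, Nat.sub_self]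
  rw [← Finset.sum_add_distrib]
  refine Finset.sum_eq_zero fun i hi => ?_
  have hi' : i < p := Finset.mem_range.mp hi
  obtain ⟨d, rfl⟩ := Nat.exists_eq_add_of_lt hi'
  obtain ⟨c, rfl⟩ := Nat.exists_eq_add_of_le hp
  rw [show i + d + 1 - (i + 1) = d by omega, show i + d + 1 - i = d + 1 by omega,
    Estd_stdVec_succ, Estd_stdVec_succ, tmul_smul, ← smul_tmul', smul_smul, smul_smul, ← add_smul]
  convert zero_smul ℂ _
  rw [hwCoeff, hwCoeff, show i + d + 1 + c - (i + 1) = d + c by omega,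
    show i + d + 1 + c - (i + d + 1 - (i + 1)) = (i + c) + 1 by omega,
    show i + d + 1 + c - i = (d + c) + 1 by omega,
    show i + d + 1 + c - (i + d + 1 - i) = i + c by omega, Nat.factorial_succ, Nat.factorial_succ]
  push_cast
  ring

lemma hwVec_ne_zero {n p : ℕ} (hp : p ≤ n) : hwVec n p ≠ 0 := by
  intro h
  -- read off the coefficient `n! (n-p)!` of `v_0 ⊗ v_p`
  let L : (Fin (n+1) → ℂ) ⊗[ℂ] (Fin (n+1) → ℂ) →ₗ[ℂ] ℂ :=
    TensorProduct.lid ℂ ℂ ∘ₗ TensorProduct.map (LinearMap.proj 0)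
      (LinearMap.proj ⟨p, Nat.lt_succ_of_le hp⟩)
  have hL : L (hwVec n p) = hwCoeff n p 0 := by
    rw [hwVec, map_sum, Finset.sum_eq_single 0]
    · simp [L, stdVec]
    · intro i _ hi
      simp [L, stdVec, hi.symm]
    · simp
  rw [h, map_zero, hwCoeff] at hL
  simp [Nat.factorial_ne_zero] at hL

lemma comm_hwVec (n p : ℕ) :
    TensorProduct.comm ℂ _ _ (hwVec n p) = (-1 : ℂ) ^ p • hwVec n p := by
  rw [hwVec, map_sum, ← Finset.sum_range_reflect, Finset.smul_sum]
  refine Finset.sum_congr rfl fun i hi => ?_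
  have hi' : i ≤ p := by simpa [Nat.lt_succ_iff] using hi
  rw [show p + 1 - 1 - i = p - i by omega, map_smul, comm_tmul, smul_smul,
    show p - (p - i) = i by omega]
  congr 1
  rw [hwCoeff, hwCoeff, show p - (p - i) = i by omega]
  obtain ⟨d, rfl⟩ := Nat.exists_eq_add_of_le hi'
  have : ((-1 : ℂ) ^ i) * (-1) ^ i = 1 := by rw [← mul_pow]; simp
  rw [show i + d - i = d by omega, pow_add]
  linear_combination (-((-1 : ℂ) ^ d * (n - d).factorial * (n - i).factorial)) * this

/-- For even `p` the vector `hwVec n p` is symmetric, so symmetrization, which vanishes on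
`Qsym n`, doubles it. -/
lemma hwVec_notMem_Qsym {n p : ℕ} (hp : p ≤ n) (he : Even p) : hwVec n p ∉ Qsym n := by
  intro h
  have hle : Qsym n ≤ LinearMap.ker
      (LinearMap.id + (TensorProduct.comm ℂ (Fin (n+1) → ℂ) (Fin (n+1) → ℂ)).toLinearMap) := by
    refine Submodule.span_le.mpr ?_
    rintro _ ⟨x, y, rfl⟩
    simp
  have h1 : hwVec n p + TensorProduct.comm ℂ _ _ (hwVec n p) = 0 := hle h
  rw [comm_hwVec, he.neg_one_pow, one_smul, ← two_smul ℂ] at h1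
  exact hwVec_ne_zero hp ((smul_eq_zero.mp h1).resolve_left two_ne_zero)

/-- For odd `p` the vector `hwVec n p` is antisymmetric, so antisymmetrization, which vanishes on
`Qalt n`, doubles it. -/
lemma hwVec_notMem_Qalt {n p : ℕ} (hp : p ≤ n) (ho : Odd p) : hwVec n p ∉ Qalt n := by
  intro h
  have hle : Qalt n ≤ LinearMap.ker
      (LinearMap.id - (TensorProduct.comm ℂ (Fin (n+1) → ℂ) (Fin (n+1) → ℂ)).toLinearMap) := by
    refine Submodule.span_le.mpr ?_
    rintro _ ⟨x, rfl⟩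
    simp
  have h1 : hwVec n p - TensorProduct.comm ℂ _ _ (hwVec n p) = 0 := hle h
  rw [comm_hwVec, ho.neg_one_pow] at h1
  have h2 : (2 : ℂ) • hwVec n p = 0 := by
    rw [← h1]
    module
  exact hwVec_ne_zero hp ((smul_eq_zero.mp h2).resolve_left two_ne_zero)

/-! ### Quotients of the tensor square -/

/-- In an invariant quotient of `V(n) ⊗ V(n)` in which the vectors `hwVec n (p k)` survive, they
generate a copy of `⊕ V(2n - 2 p_k)`. -/
lemma exists_injective_quotient {n : ℕ}
    {Q : Submodule ℂ ((Fin (n+1) → ℂ) ⊗[ℂ] (Fin (n+1) → ℂ))}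
    (hQ : ∀ X : Module.End ℂ (Fin (n+1) → ℂ), Q ≤ Q.comap (derEnd X))
    {ι : Type} [Fintype ι] (p w : ι → ℕ) (hp : ∀ k, p k ≤ n) (hw : ∀ k, w k + 2 * p k = 2 * n)
    (hinj : Function.Injective p) (hnot : ∀ k, hwVec n (p k) ∉ Q) :
    ∃ T : (∀ k, Fin (w k + 1) → ℂ) →ₗ[ℂ] (((Fin (n+1) → ℂ) ⊗[ℂ] (Fin (n+1) → ℂ)) ⧸ Q),
      Function.Injective T ∧
      (∀ x, T (piRepH ι w x) = Q.mapQ Q (tenH n) (hQ (Hstd n)) (T x)) ∧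
      (∀ x, T (piRepE ι w x) = Q.mapQ Q (tenE n) (hQ (Estd n)) (T x)) ∧
      (∀ x, T (piRepF ι w x) = Q.mapQ Q (tenF n) (hQ (Fstd n)) (T x)) := by
  have t : IsSL2Triple (Q.mapQ Q (tenH n) (hQ (Hstd n))) (Q.mapQ Q (tenE n) (hQ (Estd n)))
      (Q.mapQ Q (tenF n) (hQ (Fstd n))) := by
    obtain ⟨h1, h2, h3⟩ := isSL2Triple_ten n
    refine ⟨?_, ?_, ?_⟩ <;> refine Submodule.linearMap_qext _ (LinearMap.ext fun z => ?_)
    · exact congr_arg Q.mkQ (LinearMap.congr_fun h1 z)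
    · exact congr_arg Q.mkQ (LinearMap.congr_fun h2 z)
    · exact congr_arg Q.mkQ (LinearMap.congr_fun h3 z)
  refine exists_injective_of_highestWeight t w (fun a b hab => hinj ?_)
    (fun k => Q.mkQ (hwVec n (p k))) (fun k => ?_) (fun k => ?_) (fun k => ?_)
  · have := hw a
    have := hw b
    omega
  · simpa using hnot k
  · have : (w k : ℂ) = 2 * n - 2 * p k := by
      rw [eq_sub_iff_add_eq]
      exact_mod_cast hw k
    rw [this, ← map_smul, ← tenH_hwVec]
    rfl
  · rw [← map_zero Q.mkQ, ← tenE_hwVec (hp k)]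
    rfl

lemma finrank_pi_fin {ι : Type} [Fintype ι] (w : ι → ℕ) :
    Module.finrank ℂ (∀ k, Fin (w k + 1) → ℂ) = ∑ k, (w k + 1) := by
  simp [Module.finrank_pi_fintype]

lemma sum_arith (N a : ℕ) (h : 4 * a ≤ N + 4) :
    ∑ k ∈ Finset.range a, ((N : ℕ) - 4 * k + 1) + 2 * a * a = a * (N + 3) := by
  induction a with
  | zero => simp
  | succ a ih =>
    have := ih (by omega)
    obtain ⟨c, rfl⟩ := Nat.exists_eq_add_of_le (show 4 * a ≤ N by omega)
    rw [Finset.sum_range_succ, show 4 * a + c - 4 * a = c by omega]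
    linarith

lemma sum_dims (n : ℕ) :
    ∑ k : Fin (n/2 + 1), (2*n - 4*(k : ℕ) + 1) +
      ∑ k : Fin ((n+1)/2), (2*n - 2 - 4*(k : ℕ) + 1) = (n + 1) * (n + 1) := by
  rw [Fin.sum_univ_eq_sum_range (fun k => 2*n - 4*k + 1),
    Fin.sum_univ_eq_sum_range (fun k => 2*n - 2 - 4*k + 1)]
  have h1 := sum_arith (2 * n) (n / 2 + 1) (by omega)
  have h2 := sum_arith (2 * n - 2) ((n + 1) / 2) (by omega)
  obtain ⟨t, rfl | rfl⟩ := n.even_or_odd'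
  · rw [show 2 * t / 2 = t by omega] at *
    rw [show (2 * t + 1) / 2 = t by omega] at *
    cases t with
    | zero => simp
    | succ t =>
      rw [show 2 * (2 * (t + 1)) - 2 = 4 * t + 2 by omega] at *
      nlinarith
  · rw [show (2 * t + 1) / 2 = t by omega] at *
    rw [show (2 * t + 1 + 1) / 2 = t + 1 by omega] at *
    rw [show 2 * (2 * t + 1) - 2 = 4 * t by omega] at *
    nlinarith

/-- An injective module map onto a space of no larger dimension gives an isomorphism. -/
lemma repIso_of_injective {V W : Type*} [AddCommGroup V] [Module ℂ V] [AddCommGroup W]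
    [Module ℂ W] [FiniteDimensional ℂ V] [FiniteDimensional ℂ W]
    {hV eV fV : Module.End ℂ V} {hW eW fW : Module.End ℂ W}
    (T : W →ₗ[ℂ] V) (hT : Function.Injective T)
    (hdim : Module.finrank ℂ V ≤ Module.finrank ℂ W)
    (hh : ∀ x, T (hW x) = hV (T x)) (he : ∀ x, T (eW x) = eV (T x))
    (hf : ∀ x, T (fW x) = fV (T x)) : RepIso hV eV fV hW eW fW := by
  have heq := le_antisymm (LinearMap.finrank_le_finrank_of_injective hT) hdim
  let S : W ≃ₗ[ℂ] V := LinearEquiv.ofBijective T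
    ⟨hT, (LinearMap.injective_iff_surjective_of_finrank_eq_finrank heq).mp hT⟩
  have hS : ∀ y, T (S.symm y) = y := S.apply_symm_apply
  refine ⟨S.symm, fun x => ?_, fun x => ?_, fun x => ?_⟩ <;>
    rw [LinearEquiv.symm_apply_eq] <;> change _ = T _
  · rw [hh, hS]
  · rw [he, hS]
  · rw [hf, hS]

/-- For every `n ≥ 0`, with the induced `sl(2,ℂ)`-action,
`S²V(n) ≅ ⊕_{k=0}^{⌊n/2⌋} V(2n−4k)` and `Λ²V(n) ≅ ⊕_{k=0}^{⌊(n−1)/2⌋} V(2n−2−4k)`. -/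
theorem symmetric_and_exterior_square_decomposition (n : ℕ) :
    (∃ hS eS fS : Module.End ℂ
        ((TensorProduct ℂ (Fin (n+1) → ℂ) (Fin (n+1) → ℂ)) ⧸ Qsym n),
      (∀ z, hS (Submodule.Quotient.mk z) = Submodule.Quotient.mk (tenH n z)) ∧
      (∀ z, eS (Submodule.Quotient.mk z) = Submodule.Quotient.mk (tenE n z)) ∧
      (∀ z, fS (Submodule.Quotient.mk z) = Submodule.Quotient.mk (tenF n z)) ∧
      RepIso hS eS fS
        (piRepH (Fin (n/2 + 1)) (fun k => 2*n - 4*(k : ℕ)))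
        (piRepE (Fin (n/2 + 1)) (fun k => 2*n - 4*(k : ℕ)))
        (piRepF (Fin (n/2 + 1)) (fun k => 2*n - 4*(k : ℕ)))) ∧
    (∃ hA eA fA : Module.End ℂ
        ((TensorProduct ℂ (Fin (n+1) → ℂ) (Fin (n+1) → ℂ)) ⧸ Qalt n),
      (∀ z, hA (Submodule.Quotient.mk z) = Submodule.Quotient.mk (tenH n z)) ∧
      (∀ z, eA (Submodule.Quotient.mk z) = Submodule.Quotient.mk (tenE n z)) ∧
      (∀ z, fA (Submodule.Quotient.mk z) = Submodule.Quotient.mk (tenF n z)) ∧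
      RepIso hA eA fA
        (piRepH (Fin ((n+1)/2)) (fun k => 2*n - 2 - 4*(k : ℕ)))
        (piRepE (Fin ((n+1)/2)) (fun k => 2*n - 2 - 4*(k : ℕ)))
        (piRepF (Fin ((n+1)/2)) (fun k => 2*n - 2 - 4*(k : ℕ)))) := by
  obtain ⟨TS, iS, hS, eS, fS⟩ := exists_injective_quotient (Qsym_le_comap n)
    (fun k : Fin (n/2 + 1) => 2 * (k : ℕ)) (fun k => 2*n - 4*(k : ℕ))
    (fun k => by have := k.2; omega) (fun k => by have := k.2; omega)
    (fun a b hab => Fin.ext (by simpa using hab))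
    (fun k => hwVec_notMem_Qsym (by have := k.2; omega) (even_two_mul _))
  obtain ⟨TA, iA, hA, eA, fA⟩ := exists_injective_quotient (Qalt_le_comap n)
    (fun k : Fin ((n+1)/2) => 2 * (k : ℕ) + 1) (fun k => 2*n - 2 - 4*(k : ℕ))
    (fun k => by have := k.2; omega) (fun k => by have := k.2; omega)
    (fun a b hab => Fin.ext (by simpa using hab))
    (fun k => hwVec_notMem_Qalt (by have := k.2; omega) (odd_two_mul_add_one _))
  have dS := LinearMap.finrank_le_finrank_of_injective iS
  have dA := LinearMap.finrank_le_finrank_of_injective iA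
  have dle := finrank_add_finrank_le n
  have dsum := sum_dims n
  rw [← finrank_pi_fin (fun k : Fin (n/2 + 1) => 2*n - 4*(k : ℕ)),
    ← finrank_pi_fin (fun k : Fin ((n+1)/2) => 2*n - 2 - 4*(k : ℕ))] at dsum
  exact ⟨⟨_, _, _, fun _ => rfl, fun _ => rfl, fun _ => rfl,
      repIso_of_injective TS iS (by omega) hS eS fS⟩,
    ⟨_, _, _, fun _ => rfl, fun _ => rfl, fun _ => rfl,
      repIso_of_injective TA iA (by omega) hA eA fA⟩⟩
end
end

section
/- The algebra M satisfies the 18-term identity: for all a, b, c, d, e ∈ M (writing xy for [x,y]), −(((ab)c)e)d + (((ab)e)d)c + (((ac)b)d)e − (((ac)d)e)b − (((ad)b)c)e − (((ad)c)b)e + (((ae)b)c)d + (((ae)c)b)d + (((bd)c)a)e − (((be)a)d)c + (((be)c)d)a − (((be)d)a)c + (((cd)a)e)b − (((cd)b)e)a + (((cd)e)a)b − (((ce)b)a)d + ((ab)c)(de) + ((ac)b)(de) = 0. -/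
/-!
`M` is the simple seven-dimensional Malcev algebra, that is, the imaginary octonions with a multiple
of the cross product. It carries an invariant symmetric bilinear form `B` with
`[x,[x,y]] = B(x,x) y - B(x,y) x`. Polarization shows that adjacent letters in a left-normed
product can be swapped, up to sign and shorter products (`br_br_swap`), and that every product
becomes a combination of left-normed ones (`br_br_right`). A consequence is the reduction of every
left-normed product of four factors to products of at most two factors, with values of `B` as
coefficients (`br_br_br`).

Each of the 18 terms is thereby a combination of `[[x,y],z]`, `[x,y]` and `x`, with letters among
`a, b, c, d, e` and with coefficients built from values of `B`. Once letters are sorted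
by means of the symmetries of `[·,·]` and `B`, the coefficients of the sum vanish.
-/

noncomputable section

/-- The 7-dimensional complex vector space `M` with basis
`v₆, v₄, v₂, v₀, v₋₂, v₋₄, v₋₆` (coordinates indexed by `Fin 7` in this order). -/
abbrev M7 : Type := Fin 7 → ℂ

/-- The 2×2 minor `x_p y_q - x_q y_p`. -/
def dd (x y : M7) (p q : Fin 7) : ℂ := x p * y q - x q * y p

/-- The anticommutative bilinear product `[·,·]` on `M` determined by
`[v₆,v₀] = 20v₆`, `[v₆,v₋₂] = 10v₄`, `[v₆,v₋₄] = 4v₂`, `[v₆,v₋₆] = v₀`,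
`[v₄,v₂] = −60v₆`, `[v₄,v₀] = −20v₄`, `[v₄,v₋₄] = 6v₀`, `[v₄,v₋₆] = 4v₋₂`,
`[v₂,v₀] = −20v₂`, `[v₂,v₋₂] = −15v₀`, `[v₂,v₋₆] = 10v₋₄`,
`[v₀,v₋₂] = −20v₋₂`, `[v₀,v₋₄] = −20v₋₄`, `[v₀,v₋₆] = 20v₋₆`,
`[v₋₂,v₋₄] = −60v₋₆`, all other products of basis vectors `v_p, v_q` with `p > q` being zero. -/
def br (x y : M7) : M7 :=
  ![20 * dd x y 0 3 - 60 * dd x y 1 2,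
    10 * dd x y 0 4 - 20 * dd x y 1 3,
    4 * dd x y 0 5 - 20 * dd x y 2 3,
    dd x y 0 6 + 6 * dd x y 1 5 - 15 * dd x y 2 4,
    4 * dd x y 1 6 - 20 * dd x y 3 4,
    10 * dd x y 2 6 - 20 * dd x y 3 5,
    20 * dd x y 3 6 - 60 * dd x y 4 5]

/-- The invariant symmetric bilinear form on `M`, normalized so that
`[x,[x,y]] = B(x,x) y - B(x,y) x`. -/
def formB (x y : M7) : ℂ :=
  -20 * (x 0 * y 6 + x 6 * y 0) + 120 * (x 1 * y 5 + x 5 * y 1)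
    - 300 * (x 2 * y 4 + x 4 * y 2) + 400 * (x 3 * y 3)

lemma br_add_left (x y z : M7) : br (x + y) z = br x z + br y z := by
  ext i; fin_cases i <;> simp [br, dd] <;> ring

lemma br_sub_left (x y z : M7) : br (x - y) z = br x z - br y z := by
  ext i; fin_cases i <;> simp [br, dd] <;> ring

lemma br_neg_left (x y : M7) : br (-x) y = -br x y := by
  ext i; fin_cases i <;> simp [br, dd] <;> ring

lemma br_smul_left (t : ℂ) (x y : M7) : br (t • x) y = t • br x y := by
  ext i; fin_cases i <;> simp [br, dd] <;> ring

lemma br_anticomm (x y : M7) : br x y = -br y x := by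
  ext i; fin_cases i <;> simp [br, dd] <;> ring

lemma formB_add_left (x y z : M7) : formB (x + y) z = formB x z + formB y z := by
  simp [formB]; ring

lemma formB_sub_left (x y z : M7) : formB (x - y) z = formB x z - formB y z := by
  simp [formB]; ring

lemma formB_neg_left (x y : M7) : formB (-x) y = -formB x y := by
  simp [formB]; ring

lemma formB_smul_left (t : ℂ) (x y : M7) : formB (t • x) y = t * formB x y := by
  simp [formB]; ring

lemma formB_comm (x y : M7) : formB x y = formB y x := by
  simp [formB]; ring

/-- `B([u,y],z)` is antisymmetric in `y, z`: the associativity of the form `B`. -/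
lemma formB_br_swap (u y z : M7) : formB (br u y) z = -formB (br u z) y := by
  simp [formB, br, dd]; ring

/-- The polarization of `[x,[x,y]] = B(x,x) y - B(x,y) x`: two consecutive right multiplications
anticommute up to terms in which the form `B` occurs. -/
lemma br_br_swap (u y z : M7) :
    br (br u y) z = -br (br u z) y
      + (2 * formB y z) • u - formB u y • z - formB u z • y := by
  ext i
  simp only [Pi.add_apply, Pi.sub_apply, Pi.neg_apply, Pi.smul_apply, smul_eq_mul]
  fin_cases i <;> simp [br, dd, formB] <;> ring

/-- A product with a product on the right, in terms of left-normed products. -/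
lemma br_br_right (x y z : M7) :
    br x (br y z) = br (br x z) y
      + (2 * formB x y) • z - formB x z • y - formB y z • x := by
  ext i
  simp only [Pi.add_apply, Pi.sub_apply, Pi.smul_apply, smul_eq_mul]
  fin_cases i <;> simp [br, dd, formB] <;> ring

/-- A left-normed product of length four reduces to shorter products with coefficients in the
form `B`. The reason is that `[[x,y],[z,w]] = -[[z,w],[x,y]]`: sorting both sides with
`br_br_right` and `br_br_swap` yields `[[[x,y],z],w]` with opposite signs. -/
lemma br_br_br (x y z w : M7) :
    br (br (br x y) z) w =
      formB z w • br x y - formB y w • br x z + formB y z • br x w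
      - formB x z • br y w + formB x w • br y z
      - formB (br x y) w • z + formB (br x z) w • y - formB (br y z) w • x := by
  ext i
  simp only [Pi.add_apply, Pi.sub_apply, Pi.smul_apply, smul_eq_mul]
  fin_cases i <;> simp [br, dd, formB] <;> ring

/-- `M` satisfies the 18-term identity. -/
theorem M_satisfies_18_term_identity (a b c d e : M7) :
      - (br (br (br (br a b) c) e) d) + (br (br (br (br a b) e) d) c)
         + (br (br (br (br a c) b) d) e) - (br (br (br (br a c) d) e) b)
         - (br (br (br (br a d) b) c) e) - (br (br (br (br a d) c) b) e)
         + (br (br (br (br a e) b) c) d) + (br (br (br (br a e) c) b) d)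
         + (br (br (br (br b d) c) a) e) - (br (br (br (br b e) a) d) c)
         + (br (br (br (br b e) c) d) a) - (br (br (br (br b e) d) a) c)
         + (br (br (br (br c d) a) e) b) - (br (br (br (br c d) b) e) a)
         + (br (br (br (br c d) e) a) b) - (br (br (br (br c e) b) a) d)
         + (br (br (br a b) c) (br d e)) + (br (br (br a c) b) (br d e))
      = 0 := by
  -- The swap relations are instantiated at named letters: each then sorts letters alphabetically,
  -- whereas the general relation, used as a rewrite rule, would loop.
  have s₁ := fun u => br_br_swap u c b
  have s₂ := fun u => br_br_swap u d b
  have s₃ := fun u => br_br_swap u e b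
  have s₄ := fun u => br_br_swap u d c
  have s₅ := fun u => br_br_swap u e c
  have s₆ := fun u => br_br_swap u e d
  have s₇ := fun u => br_br_swap u c a
  have s₈ := fun u => br_br_swap u d a
  have s₉ := fun u => br_br_swap u e a
  have f₁ := fun u => formB_br_swap u c b
  have f₂ := fun u => formB_br_swap u c a
  have f₃ := fun u => formB_br_swap u d a
  simp only [br_br_right, br_br_br, br_anticomm b a, br_anticomm c a, br_anticomm d a,
    br_anticomm e a, br_anticomm c b, br_anticomm d b, br_anticomm e b, br_anticomm d c, br_anticomm e c,
    br_anticomm e d, formB_comm b a, formB_comm c a, formB_comm d a, formB_comm e a,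
    formB_comm c b, formB_comm d b, formB_comm e b, formB_comm d c, formB_comm e c,
    formB_comm e d, s₁, s₂, s₃, s₄, s₅, s₆, s₇, s₈, s₉, f₁, f₂, f₃,
    br_add_left, br_sub_left, br_neg_left, br_smul_left,
    formB_add_left, formB_sub_left, formB_neg_left, formB_smul_left]
  module

end
end

section
/- The vector space M equipped with the bilinear product [·,·] and the rescaled trilinear product ⟨x,y,z⟩ = −30·(x,y,z) is a Lie-Yamaguti algebra; that is, for all a, b, c, d, e ∈ M: (1) [a,b] + [b,a] = 0; (2) ⟨a,b,c⟩ + ⟨b,a,c⟩ = 0; (3) [[a,b],c] + [[b,c],a] + [[c,a],b] + ⟨a,b,c⟩ + ⟨b,c,a⟩ + ⟨c,a,b⟩ = 0; (4) ⟨[a,b],c,d⟩ + ⟨[b,c],a,d⟩ + ⟨[c,a],b,d⟩ = 0; (5) [⟨a,b,c⟩,d] − [⟨a,b,d⟩,c] − ⟨a,b,[c,d]⟩ = 0; (6) ⟨⟨a,b,c⟩,d,e⟩ − ⟨⟨a,b,d⟩,c,e⟩ − ⟨a,b,⟨c,d,e⟩⟩ + ⟨c,d,⟨a,b,e⟩⟩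 = 0. -/
/-!
`M` is the irreducible `sl(2,ℂ)`-module `V(6)`, and both `[·,·]` and `β` are `sl(2,ℂ)`-equivariant:
`sl(2,ℂ)` acts by derivations of the product (`br_act`), and `β(Dx, y) + β(x, Dy) = [D, β(x, y)]`
(`cE_act`, `cH_act`, `cF_act`). As `⟨x,y,·⟩` is itself the action of `-30·β(x,y)`, identity (5) is
the derivation property, and identity (6) is the equivariance of `β` combined with the commutation
relations of `sl(2,ℂ)` on `M` (`act_comm`). Identity (4) holds because the cyclic sum of
`β([a,b],c)` vanishes already in `sl(2,ℂ)` (`cE_cyclic`, `cH_cyclic`, `cF_cyclic`). Only identity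
(3) depends on the factor `-30`; it and the facts above are polynomial identities in coordinates.
-/

noncomputable section

/-- Action of `H` on `M = V(6)`: `H·v_k = k v_k`. -/
def Hm (x : M7) : M7 := ![6 * x 0, 4 * x 1, 2 * x 2, 0, -2 * x 4, -4 * x 5, -6 * x 6]

/-- Action of `E` on `M = V(6)`: `E·v₆ = 0`, `E·v₄ = 6v₆`, `E·v₂ = 5v₄`, `E·v₀ = 4v₂`,
`E·v₋₂ = 3v₀`, `E·v₋₄ = 2v₋₂`, `E·v₋₆ = v₋₄`. -/
def Em (x : M7) : M7 := ![6 * x 1, 5 * x 2, 4 * x 3, 3 * x 4, 2 * x 5, x 6, 0]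

/-- Action of `F` on `M = V(6)`: `F·v₆ = v₄`, `F·v₄ = 2v₂`, `F·v₂ = 3v₀`, `F·v₀ = 4v₋₂`,
`F·v₋₂ = 5v₋₄`, `F·v₋₄ = 6v₋₆`, `F·v₋₆ = 0`. -/
def Fm (x : M7) : M7 := ![0, x 0, 2 * x 1, 3 * x 2, 4 * x 3, 5 * x 4, 6 * x 5]

/-- Coefficient of `E` in `β(x,y)` (here `u₂ = −E`, so e.g. `β(v₆,v₋₄) = 2u₂ = −2E`). -/
def cE (x y : M7) : ℂ := -2 * dd x y 0 5 + 10 * dd x y 1 4 - 20 * dd x y 2 3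

/-- Coefficient of `H` in `β(x,y)` (here `u₀ = H`). -/
def cH (x y : M7) : ℂ := dd x y 0 6 - 4 * dd x y 1 5 + 5 * dd x y 2 4

/-- Coefficient of `F` in `β(x,y)` (here `u₋₂ = F`). -/
def cF (x y : M7) : ℂ := 2 * dd x y 1 6 - 10 * dd x y 2 5 + 20 * dd x y 3 4

/-- The trilinear operation `(x,y,z) = β(x,y)·z`, where `β(x,y) = cE x y • E + cH x y • H + cF x y • F ∈ sl(2,ℂ)`
acts on `z ∈ M` via the `sl(2,ℂ)`-action `Em, Hm, Fm`. -/
def tri (x y z : M7) : M7 := cE x y • Em z + cH x y • Hm z + cF x y • Fm z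

/-- The rescaled trilinear product `⟨x,y,z⟩ = −30·(x,y,z)`. -/
def lyt (x y z : M7) : M7 := (-30 : ℂ) • tri x y z

/-- The action of `p E + q H + r F ∈ sl(2,ℂ)` on `M`. -/
def act (p q r : ℂ) (z : M7) : M7 := p • Em z + q • Hm z + r • Fm z

theorem act_apply (p q r : ℂ) (z : M7) : act p q r z =
    ![p * (6 * z 1) + q * (6 * z 0), p * (5 * z 2) + q * (4 * z 1) + r * z 0,
      p * (4 * z 3) + q * (2 * z 2) + r * (2 * z 1), p * (3 * z 4) + r * (3 * z 2),
      p * (2 * z 5) + q * (-2 * z 4) + r * (4 * z 3), p * z 6 + q * (-4 * z 5) + r * (5 * z 4),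
      q * (-6 * z 6) + r * (6 * z 5)] := by
  ext i
  fin_cases i <;> simp [act, Em, Hm, Fm]

theorem lyt_eq_act (x y z : M7) :
    lyt x y z = act (-30 * cE x y) (-30 * cH x y) (-30 * cF x y) z := by
  simp only [lyt, tri, act, smul_add, smul_smul]

theorem act_zero (z : M7) : act 0 0 0 z = 0 := by
  simp [act]

theorem act_add (p q r p' q' r' : ℂ) (z : M7) :
    act p q r z + act p' q' r' z = act (p + p') (q + q') (r + r') z := by
  simp only [act, add_smul]
  abel

/-- `sl(2,ℂ)` acts by derivations of `[·,·]`. -/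
theorem br_act (p q r : ℂ) (x y : M7) :
    br (act p q r x) y + br x (act p q r y) = act p q r (br x y) := by
  simp only [act_apply]
  ext i
  fin_cases i <;> simp [br, dd] <;> ring

/-- The action on `M` respects `[H,E] = 2E`, `[H,F] = -2F`, `[E,F] = H`. -/
theorem act_comm (p q r p' q' r' : ℂ) (z : M7) :
    act p q r (act p' q' r' z) - act p' q' r' (act p q r z)
      = act (2 * (q * p' - p * q')) (p * r' - r * p') (2 * (r * q' - q * r')) z := by
  simp only [act_apply]
  ext i
  fin_cases i <;> simp <;> ring

theorem cE_act (p q r : ℂ) (x y : M7) :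
    cE (act p q r x) y + cE x (act p q r y) = 2 * (q * cE x y - p * cH x y) := by
  simp only [act_apply]
  simp [cE, cH, dd]
  ring

theorem cH_act (p q r : ℂ) (x y : M7) :
    cH (act p q r x) y + cH x (act p q r y) = p * cF x y - r * cE x y := by
  simp only [act_apply]
  simp [cE, cH, cF, dd]
  ring

theorem cF_act (p q r : ℂ) (x y : M7) :
    cF (act p q r x) y + cF x (act p q r y) = 2 * (r * cH x y - q * cF x y) := by
  simp only [act_apply]
  simp [cH, cF, dd]
  ring

theorem br_swap (a b : M7) : br a b = -br b a := by
  ext i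
  fin_cases i <;> simp [br, dd] <;> ring

theorem cE_swap (a b : M7) : cE a b = -cE b a := by
  simp only [cE, dd]
  ring

theorem cH_swap (a b : M7) : cH a b = -cH b a := by
  simp only [cH, dd]
  ring

theorem cF_swap (a b : M7) : cF a b = -cF b a := by
  simp only [cF, dd]
  ring

theorem cE_cyclic (a b c : M7) : cE (br a b) c + cE (br b c) a + cE (br c a) b = 0 := by
  simp [cE, br, dd]
  ring

theorem cH_cyclic (a b c : M7) : cH (br a b) c + cH (br b c) a + cH (br c a) b = 0 := by
  simp [cH, br, dd]
  ring

theorem cF_cyclic (a b c : M7) : cF (br a b) c + cF (br b c) a + cF (br c a) b = 0 := by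
  simp [cF, br, dd]
  ring

/-- The Jacobian of `[·,·]` is cancelled by the cyclic sum of `⟨·,·,·⟩`. -/
theorem br_jacobi (a b c : M7) :
    br (br a b) c + br (br b c) a + br (br c a) b
      + lyt a b c + lyt b c a + lyt c a b = 0 := by
  simp only [lyt_eq_act, act_apply]
  ext i
  fin_cases i <;> simp [br, cE, cH, cF, dd] <;> ring

/-- `M` with `[·,·]` and `⟨x,y,z⟩ = −30·(x,y,z)` is a Lie-Yamaguti algebra. -/
theorem M_is_lie_yamaguti :
    (∀ a b : M7, br a b + br b a = 0) ∧
    (∀ a b c : M7, lyt a b c + lyt b a c = 0) ∧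
    (∀ a b c : M7,
      br (br a b) c + br (br b c) a + br (br c a) b
        + lyt a b c + lyt b c a + lyt c a b = 0) ∧
    (∀ a b c d : M7, lyt (br a b) c d + lyt (br b c) a d + lyt (br c a) b d = 0) ∧
    (∀ a b c d : M7, br (lyt a b c) d - br (lyt a b d) c - lyt a b (br c d) = 0) ∧
    (∀ a b c d e : M7,
      lyt (lyt a b c) d e - lyt (lyt a b d) c e - lyt a b (lyt c d e)
        + lyt c d (lyt a b e) = 0) := by
  refine ⟨fun a b => ?_, fun a b c => ?_, br_jacobi, fun a b c d => ?_, fun a b c d => ?_,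
    fun a b c d e => ?_⟩
  · rw [br_swap a b, neg_add_cancel]
  · rw [lyt_eq_act, lyt_eq_act, act_add, cE_swap a b, cH_swap a b, cF_swap a b]
    simp [act_zero]
  · simp only [lyt_eq_act, act_add, ← mul_add, cE_cyclic, cH_cyclic, cF_cyclic, mul_zero, act_zero]
  · simp only [lyt_eq_act]
    rw [br_swap _ c, ← br_act]
    abel
  · rw [lyt_eq_act a b c, lyt_eq_act a b d, lyt_eq_act a b (lyt c d e), lyt_eq_act a b e]
    generalize -30 * cE a b = p, -30 * cH a b = q, -30 * cF a b = r
    have hE := cE_act p q r c d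
    have hH := cH_act p q r c d
    have hF := cF_act p q r c d
    have hc := act_comm p q r (-30 * cE c d) (-30 * cH c d) (-30 * cF c d) e
    have key : lyt (act p q r c) d e + lyt c (act p q r d) e
        = act p q r (lyt c d e) - lyt c d (act p q r e) := by
      rw [lyt_eq_act c d e, lyt_eq_act c d (act p q r e), hc, lyt_eq_act, lyt_eq_act, act_add,
        ← mul_add, ← mul_add, ← mul_add, hE, hH, hF]
      congr 1 <;> ring
    have hs : lyt (act p q r d) c e = -lyt c (act p q r d) e := by
      rw [eq_neg_iff_add_eq_zero, lyt_eq_act, lyt_eq_act, act_add, cE_swap _ c, cH_swap _ c,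
        cF_swap _ c]
      simp [act_zero]
    rw [hs, sub_neg_eq_add, key]
    abel

end
end
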